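/- Let B be a unital complex Banach algebra, let (A,E) and (A',E') be B-valued Banach noncommutative probability spaces, and let a ∈ A and a' ∈ A'. Fix n ≥ 0. If the moment functions satisfy μ_{a,k} = μ_{a',k} for all k = 1, …, n+1, then the nth terms of the power series expansions about 0 of the R-transforms coincide: (R_a)_n(b,…,b) = (R_{a'})_n(b,…,b) for all b ∈ B. -/

import Mathlib

open scoped Topology
open Filter

noncomputable section

variable (B A : Type*) [NormedRing B] [NormedAlgebra ℂ B] [CompleteSpace B]
  [NormedRing A] [NormedAlgebra ℂ A] [CompleteSpace A]

/-- A `B`-valued Banach noncommutative probability space structure on `A`. -/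
structure NCPS where
  ι : B →ₐ[ℂ] A
  isometry : Isometry ι
  E : A →L[ℂ] B
  E_ι : ∀ b : B, E (ι b) = b
  cond_exp : ∀ (a : A) (b₁ b₂ : B), E (ι b₁ * a * ι b₂) = b₁ * E a * b₂

variable {B A}

/-- `𝒞_a(b) = E((1 - ba)⁻¹ b)`. -/
def Ca (P : NCPS B A) (a : A) (b : B) : B :=
  P.E (Ring.inverse (1 - P.ι b * a) * P.ι b)

/-- `R` is (a version of) the R-transform of `a`: `R` is analytic near `0` and
`b ↦ (1 + b R(b))⁻¹ b` is a local right inverse of `𝒞_a`, i.e.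
`𝒞_a⁽⁻¹⁾(b) = (1 + b R(b))⁻¹ b`. -/
def IsRTransform (P : NCPS B A) (a : A) (R : B → B) : Prop :=
  AnalyticAt ℂ R 0 ∧
    ∀ᶠ b in 𝓝 (0 : B), Ca P a (Ring.inverse (1 + b * R b) * b) = b

/-- The `k`-th moment function `μ_{a,k}(b₁,…,b_k) = E(b₁ a b₂ a ⋯ b_k a)`. -/
def momentFn (P : NCPS B A) (a : A) (k : ℕ) (b : Fin k → B) : B :=
  P.E (List.ofFn fun j => P.ι (b j) * a).prod

/-!
Truncating the geometric series for `𝒞_a` shows that agreement of the first `n + 1` moments forces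
`𝒞_a - 𝒞_{a'} = O(‖b‖ ^ (n + 3))`. As `𝒞_a` has strict derivative `id` at `0`, the local inverses
`G = (1 + b R)⁻¹ b` and `G' = (1 + b R')⁻¹ b` differ by `O(‖b‖ ^ (n + 3))` as well, and then so does
`b (R - R') b = (1 + b R') (G' - G) (1 + R b)`. Comparing homogeneous terms gives
`b (R_n(b,…,b) - R'_n(b,…,b)) b = 0` for every `b`. One may cancel `b` when it is invertible, in
particular near `1`, and the identity theorem carries the vanishing over to all `b`.
-/

open Asymptotics

section PowerSeries

variable {𝕜 V W : Type*} [NontriviallyNormedField 𝕜] [NormedAddCommGroup V] [NormedSpace 𝕜 V]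
  [NormedAddCommGroup W] [NormedSpace 𝕜 W]

theorem eq_zero_of_homogeneous_of_isBigO {g : V → W} {m : ℕ}
    (hom : ∀ (c : 𝕜) (x : V), g (c • x) = c ^ m • g x)
    (hg : g =O[𝓝 0] fun x => ‖x‖ ^ (m + 1)) (x : V) : g x = 0 := by
  have tendsto_line : Tendsto (fun c : 𝕜 => c • x) (𝓝 0) (𝓝 0) :=
    (continuous_id.smul continuous_const).tendsto' _ _ (zero_smul 𝕜 x)
  have norm_line : (fun c : 𝕜 => ‖c • x‖ ^ (m + 1)) =O[𝓝 0] fun c => ‖c‖ ^ (m + 1) :=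
    .of_bound (‖x‖ ^ (m + 1)) (.of_forall fun c => by simp [norm_smul, mul_pow, mul_comm])
  have monomial : (fun c : 𝕜 => ContinuousMultilinearMap.mkPiRing 𝕜 (Fin m) (g x) fun _ => c)
      =O[𝓝 0] fun c => ‖c‖ ^ (m + 1) :=
    ((hg.comp_tendsto tendsto_line).trans norm_line).congr_left fun c => by simp [hom]
  simpa using monomial.continuousMultilinearMap_apply_eq_zero 1

theorem multilinear_diag_eq_zero_of_eventually [PreconnectedSpace V] {ι : Type*} [Finite ι]
    (f : ContinuousMultilinearMap 𝕜 (fun _ : ι => V) W) {x₀ : V}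
    (hf : ∀ᶠ x in 𝓝 x₀, f (fun _ => x) = 0) (x : V) : f (fun _ => x) = 0 := by
  have := Fintype.ofFinite ι
  have analytic : AnalyticOnNhd 𝕜 (fun x : V => f fun _ => x) Set.univ := fun x _ =>
    f.analyticAt.fun_comp (AnalyticAt.pi fun _ => analyticAt_id)
  exact analytic.eqOn_zero_of_preconnected_of_eventuallyEq_zero isPreconnected_univ
    (Set.mem_univ x₀) hf (Set.mem_univ x)

end PowerSeries

section NormedAlgebra

variable {𝕜 S : Type*} [NontriviallyNormedField 𝕜] [NormedRing S] [NormedAlgebra 𝕜 S]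

theorem mul_coeff_mul_eq_zero_of_isBigO {f : S → S} {p : FormalMultilinearSeries 𝕜 S S}
    (hf : HasFPowerSeriesAt f p 0) {n : ℕ}
    (h : (fun x => x * f x * x) =O[𝓝 0] fun x => ‖x‖ ^ (n + 3)) (x : S) :
    x * p n (fun _ => x) * x = 0 := by
  induction n using Nat.strong_induction_on generalizing x with
  | _ n ih =>
  have lower_terms (y : S) (k : ℕ) (hk : k < n) : y * p k (fun _ => y) * y = 0 :=
    ih k hk (h.trans (isLittleO_norm_pow_norm_pow (by lia)).isBigO) y
  have leading_term (y : S) :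
      y * p.partialSum (n + 1) y * y = y * p n (fun _ => y) * y := by
    simp only [FormalMultilinearSeries.partialSum, Finset.mul_sum, Finset.sum_mul]
    rw [Finset.sum_range_succ, Finset.sum_eq_zero, zero_add]
    exact fun k hk => lower_terms y k (Finset.mem_range.1 hk)
  have remainder : (fun y => y * (f y - p.partialSum (n + 1) y) * y)
      =O[𝓝 0] fun y => ‖y‖ ^ (n + 3) := by
    have id_isBigO : (fun y : S => y) =O[𝓝 0] fun y => ‖y‖ := (isBigO_refl _ _).norm_right
    have taylor := by simpa only [zero_add] using hf.isBigO_sub_partialSum_pow (n + 1)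
    exact ((id_isBigO.mul taylor).mul id_isBigO).congr_right fun y => by ring
  refine eq_zero_of_homogeneous_of_isBigO (𝕜 := 𝕜) (m := n + 2)
    (g := fun y => y * p n (fun _ => y) * y) (fun c y => ?_) ?_ x
  · have coeff_smul : p n (fun _ => c • y) = c ^ n • p n (fun _ => y) := by
      simpa using (p n).map_smul_univ (fun _ => c) fun _ => y
    rw [coeff_smul]
    simp only [smul_mul_assoc, mul_smul_comm, smul_smul]
    ring_nf
  · exact (h.sub remainder).congr_left fun y => by
      rw [← leading_term, ← sub_mul, ← mul_sub, sub_sub_cancel]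

theorem multilinear_diag_eq_zero_of_mul_mul_eq_zero [HasSummableGeomSeries S] [PreconnectedSpace S]
    {ι : Type*} [Finite ι] (f : ContinuousMultilinearMap 𝕜 (fun _ : ι => S) S)
    (hf : ∀ x, x * f (fun _ => x) * x = 0) (x : S) : f (fun _ => x) = 0 := by
  refine multilinear_diag_eq_zero_of_eventually f (x₀ := 1) ?_ x
  filter_upwards [Units.nhds (1 : Sˣ)] with y hy
  exact hy.mul_right_eq_zero.1 (hy.mul_left_eq_zero.1 (hf y))

end NormedAlgebra

/-- The function `b ↦ (1 + b R(b))⁻¹ b`, which is the local inverse `𝒞_a⁽⁻¹⁾` when `R` is the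
R-transform of `a`. Where `1 + b R(b)` is not invertible, the value is `0`. -/
def cauchyInverse {S : Type*} [Ring S] (R : S → S) (b : S) : S :=
  Ring.inverse (1 + b * R b) * b

section CauchyInverse

section Ring

variable {S : Type*} [Ring S] {R R' : S → S} {b : S}

theorem one_add_mul_cauchyInverse (h : IsUnit (1 + b * R b)) :
    (1 + b * R b) * cauchyInverse R b = b :=
  Ring.mul_inverse_cancel_left _ _ h

theorem cauchyInverse_mul_one_add (h : IsUnit (1 + b * R b)) :
    cauchyInverse R b * (1 + R b * b) = b := by
  rw [cauchyInverse, mul_assoc,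
    show b * (1 + R b * b) = (1 + b * R b) * b by noncomm_ring,
    Ring.inverse_mul_cancel_left _ _ h]

theorem mul_sub_mul_eq_cauchyInverse_sub (h : IsUnit (1 + b * R b))
    (h' : IsUnit (1 + b * R' b)) :
    b * (R b - R' b) * b =
      (1 + b * R' b) * (cauchyInverse R' b - cauchyInverse R b) * (1 + R b * b) := by
  symm
  rw [mul_sub (1 + b * R' b), one_add_mul_cauchyInverse h', sub_mul,
    mul_assoc _ (cauchyInverse R b), cauchyInverse_mul_one_add h]
  noncomm_ring

end Ring

variable {S : Type*} [NormedRing S] {R R' : S → S}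

theorem tendsto_one_add_mul (hR : ContinuousAt R 0) :
    Tendsto (fun b => 1 + b * R b) (𝓝 0) (𝓝 1) := by
  simpa using (tendsto_id.mul hR.tendsto).const_add 1

theorem tendsto_one_add_mul' (hR : ContinuousAt R 0) :
    Tendsto (fun b => 1 + R b * b) (𝓝 0) (𝓝 1) := by
  simpa using (hR.tendsto.mul tendsto_id).const_add 1

variable [HasSummableGeomSeries S]

theorem eventually_isUnit_one_add_mul (hR : ContinuousAt R 0) :
    ∀ᶠ b in 𝓝 0, IsUnit (1 + b * R b) :=
  (tendsto_one_add_mul hR).eventually (Units.nhds 1)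

theorem cauchyInverse_isBigO (hR : ContinuousAt R 0) :
    cauchyInverse R =O[𝓝 0] fun b => ‖b‖ := by
  have inverse_bounded : (fun b => Ring.inverse (1 + b * R b)) =O[𝓝 0] fun _ => (1 : ℝ) :=
    ((NormedRing.inverse_continuousAt 1).tendsto.comp (tendsto_one_add_mul hR)).isBigO_one ℝ
  exact (inverse_bounded.mul (isBigO_refl _ _).norm_right).congr_right fun b => one_mul ‖b‖

theorem tendsto_cauchyInverse (hR : ContinuousAt R 0) :
    Tendsto (cauchyInverse R) (𝓝 0) (𝓝 0) :=
  (cauchyInverse_isBigO hR).trans_tendsto (by simpa using (continuous_norm (E := S)).tendsto 0)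

theorem mul_sub_mul_isBigO_cauchyInverse_sub (hR : ContinuousAt R 0) (hR' : ContinuousAt R' 0) :
    (fun b => b * (R b - R' b) * b)
      =O[𝓝 0] fun b => cauchyInverse R b - cauchyInverse R' b := by
  have left_bounded := (tendsto_one_add_mul hR').isBigO_one ℝ
  have right_bounded := (tendsto_one_add_mul' hR).isBigO_one ℝ
  have difference : (fun b => cauchyInverse R' b - cauchyInverse R b)
      =O[𝓝 0] fun b => ‖cauchyInverse R b - cauchyInverse R' b‖ :=
    (isBigO_refl _ _).norm_right.congr_right fun b => norm_sub_rev _ _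
  refine (((left_bounded.mul difference).mul right_bounded).congr' ?_ ?_).of_norm_right
  · filter_upwards [eventually_isUnit_one_add_mul hR, eventually_isUnit_one_add_mul hR'] with b h h'
    exact (mul_sub_mul_eq_cauchyInverse_sub h h').symm
  · simp only [one_mul, mul_one]; rfl

end CauchyInverse

section RTransform

omit [CompleteSpace B] [CompleteSpace A]

namespace NCPS

variable (P : NCPS B A)

theorem norm_ι (b : B) : ‖P.ι b‖ = ‖b‖ :=
  (AddMonoidHomClass.isometry_iff_norm P.ι).1 P.isometry b

theorem E_one : P.E 1 = 1 := by
  simpa using P.E_ι 1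

theorem E_mul_ι (x : A) (b : B) : P.E (x * P.ι b) = P.E x * b := by
  simpa using P.cond_exp x 1 b

include P in
theorem hasSummableGeomSeries [HasSummableGeomSeries A] : HasSummableGeomSeries B where
  summable_geometric_of_norm_lt_one b hb := by
    simpa only [Function.comp_def, ← map_pow, P.E_ι] using
      (summable_geometric_of_norm_lt_one (x := P.ι b) (by rwa [P.norm_ι])).map P.E P.E.continuous

end NCPS

variable {A' : Type*} [NormedRing A'] [NormedAlgebra ℂ A']
  {P : NCPS B A} {P' : NCPS B A'} {a : A} {a' : A'}

theorem IsRTransform.continuousAt {R : B → B} (hR : IsRTransform P a R) : ContinuousAt R 0 :=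
  hR.1.continuousAt

theorem IsRTransform.eventually_Ca_cauchyInverse {R : B → B} (hR : IsRTransform P a R) :
    ∀ᶠ b in 𝓝 0, Ca P a (cauchyInverse R b) = b :=
  hR.2

variable (P a)

theorem momentFn_const (k : ℕ) (b : B) :
    momentFn P a k (fun _ => b) = P.E ((P.ι b * a) ^ k) := by
  rw [momentFn, List.ofFn_const, List.prod_replicate]

variable [HasSummableGeomSeries A]

theorem Ca_sub_geom_sum_isBigO (m : ℕ) :
    (fun b => Ca P a b - (∑ k ∈ Finset.range m, P.E ((P.ι b * a) ^ k)) * b)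
      =O[𝓝 0] fun b => ‖b‖ ^ (m + 1) := by
  have ι_mul_isBigO : (fun b => P.ι b * a) =O[𝓝 0] fun b => ‖b‖ :=
    .of_bound ‖a‖ (.of_forall fun b => by
      simpa only [P.norm_ι, norm_norm, mul_comm ‖a‖] using norm_mul_le (P.ι b) a)
  have tendsto_neg_ι_mul : Tendsto (fun b => -(P.ι b * a)) (𝓝 0) (𝓝 0) :=
    (P.isometry.continuous.mul continuous_const).neg.tendsto' _ _ (by simp)
  have resolvent_remainder :
      (fun b => Ring.inverse (1 - P.ι b * a) - ∑ k ∈ Finset.range m, (P.ι b * a) ^ k)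
        =O[𝓝 0] fun b => ‖b‖ ^ m :=
    (((NormedRing.inverse_add_norm_diff_nth_order 1 m).comp_tendsto
      tendsto_neg_ι_mul).congr_left fun b => by simp [← sub_eq_add_neg]).trans
      (ι_mul_isBigO.neg_left.norm_left.pow m)
  refine ((P.E.isBigO_comp _ _).trans resolvent_remainder |>.mul
    (isBigO_refl (fun b : B => b) _).norm_right).congr (fun b => ?_) fun b => (pow_succ _ _).symm
  rw [Ca, P.E_mul_ι, map_sub, map_sum, sub_mul]

theorem hasStrictFDerivAt_Ca_zero :
    HasStrictFDerivAt (Ca P a) (ContinuousLinearMap.id ℂ B) 0 := by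
  let ιL : B →L[ℂ] A := (P.ι.toLinearMap.toLinearIsometry P.isometry).toContinuousLinearMap
  have hι : HasStrictFDerivAt P.ι ιL 0 := ιL.hasStrictFDerivAt
  have hinv : HasStrictFDerivAt (𝕜 := ℂ) Ring.inverse
      (-ContinuousLinearMap.mulLeftRight ℂ A ↑(1 : Aˣ)⁻¹ ↑(1 : Aˣ)⁻¹) (1 - P.ι 0 * a) := by
    simpa using hasStrictFDerivAt_ringInverse (𝕜 := ℂ) (1 : Aˣ)
  have hresolvent := hinv.comp (0 : B) ((hι.mul_const' a).const_sub 1)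
  refine (P.E.hasStrictFDerivAt.comp (0 : B) (hresolvent.mul' hι)).congr_fderiv ?_
  ext h
  simpa [ιL] using! P.E_ι h

variable {P a}

theorem Ca_sub_Ca_isBigO_of_moments_eq [HasSummableGeomSeries A'] {n : ℕ}
    (hmom : ∀ k, 1 ≤ k → k ≤ n → ∀ b : B,
      momentFn P a k (fun _ => b) = momentFn P' a' k fun _ => b) :
    (fun b => Ca P a b - Ca P' a' b) =O[𝓝 0] fun b => ‖b‖ ^ (n + 2) := by
  refine ((Ca_sub_geom_sum_isBigO P a (n + 1)).sub
    (Ca_sub_geom_sum_isBigO P' a' (n + 1))).congr_left fun b => ?_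
  have moment_eq : ∀ k ∈ Finset.range (n + 1),
      P.E ((P.ι b * a) ^ k) = P'.E ((P'.ι b * a') ^ k) := by
    rintro (_ | k) hk
    · simp only [pow_zero, NCPS.E_one]
    · simpa only [momentFn_const] using hmom (k + 1) (by lia) (Finset.mem_range_succ_iff.1 hk) b
  rw [Finset.sum_congr rfl moment_eq, sub_sub_sub_cancel_right]

theorem cauchyInverse_sub_isBigO {R R' : B → B} (hR : IsRTransform P a R)
    (hR' : IsRTransform P' a' R') {m : ℕ}
    (hC : (fun b => Ca P a b - Ca P' a' b) =O[𝓝 0] fun b => ‖b‖ ^ m) :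
    (fun b => cauchyInverse R b - cauchyInverse R' b) =O[𝓝 0] fun b => ‖b‖ ^ m := by
  have := P.hasSummableGeomSeries
  have hG := tendsto_cauchyInverse hR.continuousAt
  have hG' := tendsto_cauchyInverse hR'.continuousAt
  have difference_isBigO_image :
      (fun b => cauchyInverse R b - cauchyInverse R' b) =O[𝓝 0]
        fun b => Ca P a (cauchyInverse R b) - Ca P a (cauchyInverse R' b) :=
    ((hasStrictFDerivAt_Ca_zero P a).isTheta_sub .id).isBigO_symm.comp_tendsto
      (hG.prodMk_nhds hG')
  have image_eq : (fun b => -(Ca P a (cauchyInverse R' b) - Ca P' a' (cauchyInverse R' b)))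
      =ᶠ[𝓝 0] fun b => Ca P a (cauchyInverse R b) - Ca P a (cauchyInverse R' b) := by
    filter_upwards [hR.eventually_Ca_cauchyInverse, hR'.eventually_Ca_cauchyInverse] with b h h'
    rw [h, h', neg_sub]
  have image_isBigO := (hC.comp_tendsto hG').trans
    ((cauchyInverse_isBigO hR'.continuousAt).norm_left.pow m)
  exact difference_isBigO_image.trans (image_isBigO.neg_left.congr' image_eq .rfl)

theorem stmt_14_general [HasSummableGeomSeries A'] (P : NCPS B A) (P' : NCPS B A') (a : A)
    (a' : A') (n : ℕ)
    (hmom : ∀ k : ℕ, 1 ≤ k → k ≤ n + 1 → ∀ b : B,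
      momentFn P a k (fun _ => b) = momentFn P' a' k fun _ => b) :
    ∀ (R R' : B → B) (pR pR' : FormalMultilinearSeries ℂ B B),
      IsRTransform P a R → IsRTransform P' a' R' →
      HasFPowerSeriesAt R pR 0 → HasFPowerSeriesAt R' pR' 0 →
      ∀ b : B, pR n (fun _ => b) = pR' n (fun _ => b) := by
  intro R R' pR pR' hR hR' hpR hpR' b
  have := P.hasSummableGeomSeries
  have inverses_close := cauchyInverse_sub_isBigO hR hR' (Ca_sub_Ca_isBigO_of_moments_eq hmom)
  have sandwich_small : (fun b => b * (R b - R' b) * b) =O[𝓝 0] fun b => ‖b‖ ^ (n + 3) :=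
    (mul_sub_mul_isBigO_cauchyInverse_sub hR.continuousAt hR'.continuousAt).trans
      inverses_close
  have sandwich_coeff : ∀ x, x * (pR - pR') n (fun _ => x) * x = 0 :=
    mul_coeff_mul_eq_zero_of_isBigO (hpR.sub hpR') sandwich_small
  exact sub_eq_zero.1 (multilinear_diag_eq_zero_of_mul_mul_eq_zero _ sandwich_coeff b)

end RTransform

/-- Proposition 4.2: the `n`-th term of the power series expansion of the R-transform about `0`
depends only on the first `n+1` moment functions. -/
theorem stmt_14 {A' : Type*} [NormedRing A'] [NormedAlgebra ℂ A'] [CompleteSpace A']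
    (P : NCPS B A) (P' : NCPS B A') (a : A) (a' : A') (n : ℕ)
    (hmom : ∀ k : ℕ, 1 ≤ k → k ≤ n + 1 → ∀ b : Fin k → B,
      momentFn P a k b = momentFn P' a' k b) :
    ∀ (R R' : B → B) (pR pR' : FormalMultilinearSeries ℂ B B),
      IsRTransform P a R → IsRTransform P' a' R' →
      HasFPowerSeriesAt R pR 0 → HasFPowerSeriesAt R' pR' 0 →
      ∀ b : B, pR n (fun _ => b) = pR' n (fun _ => b) :=
  stmt_14_general P P' a a' n fun k hk hkn b => hmom k hk hkn fun _ => b
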